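/- arXiv:2207.14550 — 2 statements merged into one kernel-verified Lean document; each statement's English description precedes it below -/
import Mathlib

section
/- Let q be a probability vector on a finite index set of cardinality K ≥ 1, and let a* be an index with q(a*) < 1. Then H(q) ≤ (1 − q(a*)) · log( e · K / (1 − q(a*)) ), where H(q) = −∑_a q(a) log q(a) is the Shannon entropy with the convention 0 log 0 = 0. -/
/-!
Write `t = 1 - q a*`, `K` for the cardinality, and `c = t / K`. The entropy function
`negMulLog` is concave, so it lies below its tangents. The tangent at `1` bounds the term of
`a*` by `t`. The tangent at `c` bounds every other term by `c - q a - q a * log c`; these sum to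
`(K - 1) * c - t - t * log c ≤ t * log (K / t)`. Together they give
`t * (1 + log (K / t)) = t * log (e * K / t)`.
-/

/-- The concave function `negMulLog` lies below its tangent at `c`. -/
lemma negMulLog_le_tangent {c x : ℝ} (hc : 0 < c) (hx : 0 ≤ x) :
    Real.negMulLog x ≤ c - x - x * Real.log c := by
  have h := Real.negMulLog_le_one_sub_self (div_nonneg hx hc.le)
  have hm := Real.negMulLog_mul c (x / c)
  have hcx : c * (x / c) = x := by field_simp
  have hl : x / c * Real.negMulLog c = -(x * Real.log c) := by
    rw [Real.negMulLog]; field_simp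
  rw [hcx, hl] at hm
  have h2 := mul_le_mul_of_nonneg_left h hc.le
  rw [mul_sub, hcx, mul_one] at h2
  linarith

/-- Inequality (boundH): for a probability vector q on a finite index set of
cardinality K ≥ 1 and an index a* with q(a*) < 1,
H(q) ≤ (1 − q(a*)) log(e K / (1 − q(a*))), where H is the Shannon entropy. -/
theorem stmt_4 {α : Type*} [Fintype α] (q : α → ℝ)
    (h0 : ∀ a, 0 ≤ q a) (h1 : ∑ a, q a = 1)
    (astar : α) (hlt : q astar < 1) :
    ∑ a, Real.negMulLog (q a) ≤
      (1 - q astar) *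
        Real.log (Real.exp 1 * (Fintype.card α : ℝ) / (1 - q astar)) := by
  classical
  have ht : 0 < 1 - q astar := sub_pos.2 hlt
  have hK : (0 : ℝ) < Fintype.card α := by
    exact_mod_cast Fintype.card_pos_iff.2 ⟨astar⟩
  have hc : 0 < (1 - q astar) / (Fintype.card α : ℝ) := div_pos ht hK
  have hlog : Real.log (Real.exp 1 * (Fintype.card α : ℝ) / (1 - q astar)) =
      1 - Real.log ((1 - q astar) / (Fintype.card α : ℝ)) := by
    rw [Real.log_div (by positivity) ht.ne', Real.log_mul (by positivity) hK.ne',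
      Real.log_exp, Real.log_div ht.ne' hK.ne']
    ring
  have hKc : (Fintype.card α : ℝ) * ((1 - q astar) / (Fintype.card α : ℝ)) = 1 - q astar := by
    field_simp
  rw [hlog]
  generalize (1 - q astar) / (Fintype.card α : ℝ) = c at hc hKc ⊢
  have hq : ∑ a ∈ Finset.univ.erase astar, q a = 1 - q astar := by
    rw [← h1, ← Finset.add_sum_erase _ q (Finset.mem_univ astar)]
    ring
  have hsum : ∑ a ∈ Finset.univ.erase astar, Real.negMulLog (q a) ≤
      ∑ a ∈ Finset.univ.erase astar, (c - q a - q a * Real.log c) :=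
    Finset.sum_le_sum fun a _ => negMulLog_le_tangent hc (h0 a)
  rw [Finset.sum_sub_distrib, Finset.sum_sub_distrib, ← Finset.sum_mul, hq, Finset.sum_const,
    nsmul_eq_mul, Finset.cast_card_erase_of_mem (Finset.mem_univ astar), Finset.card_univ,
    sub_mul, hKc] at hsum
  rw [← Finset.add_sum_erase _ _ (Finset.mem_univ astar)]
  have hs := Real.negMulLog_le_one_sub_self (h0 astar)
  linarith
end

section
/- Let k be a positive integer, β > 0, ℓ ∈ ℝ^k, c ∈ ℝ, and let p, q ∈ ℝ^k be probability vectors with strictly positive entries. Define D(q,p) = β · ∑_{a=1}^k ( q_a log(q_a / p_a) + p_a − q_a ) and ξ(x) = exp(−x) + x − 1. Then ⟨ℓ, p − q⟩ − D(q,p) ≤ β · ∑_{a=1}^k p_a · ξ( (ℓ_a − c) / β ). -/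
/-- The one-coordinate stability bound. With `u = -x - log (q / p)` it is the tangent-line
inequality `u + 1 ≤ exp u` multiplied by `q`, since `q * exp u = p * exp (-x)`. -/
lemma entropic_stability_scalar (x p q : ℝ) (hp : 0 < p) (hq : 0 < q) :
    x * (p - q) - (q * Real.log (q / p) + p - q) ≤ p * (Real.exp (-x) + x - 1) := by
  have hexp : q * Real.exp (-x - Real.log (q / p)) = p * Real.exp (-x) := by
    rw [Real.exp_sub, Real.exp_log (div_pos hq hp)]
    field_simp
  have htangent := mul_le_mul_of_nonneg_left
    (Real.add_one_le_exp (-x - Real.log (q / p))) hq.le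
  rw [hexp] at htangent
  linarith

/-- Shift-invariant form of the FTRL stability bound (used in Lemma 7 of the paper):
for β > 0, ℓ ∈ ℝ^k, c ∈ ℝ and strictly positive probability vectors p, q,
⟨ℓ, p − q⟩ − D(q,p) ≤ β ∑_a p_a ξ((ℓ_a − c)/β), where
D(q,p) = β ∑_a (q_a log(q_a/p_a) + p_a − q_a) and ξ(x) = exp(−x) + x − 1. -/
theorem stmt_8 (k : ℕ) (hk : 0 < k) (β : ℝ) (hβ : 0 < β)
    (l : Fin k → ℝ) (c : ℝ) (p q : Fin k → ℝ)
    (hp0 : ∀ a, 0 < p a) (hp1 : ∑ a, p a = 1)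
    (hq0 : ∀ a, 0 < q a) (hq1 : ∑ a, q a = 1) :
    (∑ a, l a * (p a - q a)) -
        β * ∑ a, (q a * Real.log (q a / p a) + p a - q a) ≤
      β * ∑ a, p a * (Real.exp (-((l a - c) / β)) + (l a - c) / β - 1) := by
  -- Both vectors have total mass one, so `l` may be replaced by `l - c`.
  have hshift : ∑ a, l a * (p a - q a) = β * ∑ a, (l a - c) / β * (p a - q a) := by
    have hc : ∑ a, c * (p a - q a) = 0 := by
      rw [← Finset.mul_sum, Finset.sum_sub_distrib, hp1, hq1, sub_self, mul_zero]
    rw [← sub_zero (∑ a, l a * (p a - q a)), ← hc, ← Finset.sum_sub_distrib, Finset.mul_sum]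
    refine Finset.sum_congr rfl fun a _ => ?_
    field_simp
  rw [hshift, ← mul_sub, ← Finset.sum_sub_distrib]
  exact mul_le_mul_of_nonneg_left (Finset.sum_le_sum fun a _ =>
    entropic_stability_scalar ((l a - c) / β) (p a) (q a) (hp0 a) (hq0 a)) hβ.le
end
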